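/- arXiv:2403.05938 — 9 statements merged into one kernel-verified Lean document; each statement's English description precedes it below -/
import Mathlib

section
/- Let α, β, γ be real numbers with α > π/3, 0 < γ < β and β + γ > π. If a, b, c are natural numbers satisfying a·α + b·β + c·γ = 2π, a + b + c ≥ 3, b + c even, and b ≥ 2, then b = 2, c = 0 and a = 1 or a = 2. -/
open Real

/-! Since `γ ≤ β`, trading copies of `β` for copies of `γ` only lowers an angle sum, so `b ≥ 2` and
`b + c ≥ 4` would give `b * β + c * γ ≥ 2 * (β + γ) > 2 * π`. Hence `b + c ≤ 3`, and parity leaves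
only `b = 2`, `c = 0`. As `2 * β ≥ β + γ > π`, less than `π` is then left for the copies of `α`,
so that `a < 3`. -/

section AngleSum

variable {R : Type*} [CommRing R] [LinearOrder R] [IsStrictOrderedRing R] {α β γ p : R}
  {a b c k : ℕ}

lemma natCast_mul_add_le_of_le_of_two_mul_le_add (hγ : 0 ≤ γ) (hγβ : γ ≤ β) (hkb : k ≤ b)
    (hk : 2 * k ≤ b + c) : k * (β + γ) ≤ b * β + c * γ := by
  have hkb' : (0 : R) ≤ b - k := sub_nonneg.2 (by exact_mod_cast hkb)
  have hk' : (0 : R) ≤ b + c - 2 * k := sub_nonneg.2 (by exact_mod_cast hk)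
  have hexcess : 0 ≤ (b - k) * (β - γ) + (b + c - 2 * k) * γ :=
    add_nonneg (mul_nonneg hkb' (sub_nonneg.2 hγβ)) (mul_nonneg hk' hγ)
  linear_combination hexcess

lemma add_lt_two_mul_of_mul_add_mul_le (hγ : 0 ≤ γ) (hγβ : γ ≤ β) (hβγ : p < β + γ) (hk : 0 < k)
    (hkb : k ≤ b) (hsum : b * β + c * γ ≤ k * p) : b + c < 2 * k := by
  by_contra! hbc
  have hlt : k * p < k * (β + γ) := mul_lt_mul_of_pos_left hβγ (by exact_mod_cast hk)
  have hle := natCast_mul_add_le_of_le_of_two_mul_le_add hγ hγβ hkb hbc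
  exact (hlt.trans_le hle).not_ge hsum

/-- An angle of a regular `m`-gon exceeds `(1 - 2 / m) * π`, so with `p = π` the value `k = 3`
serves all `m ≥ 3`, while `k = 2` serves `m ≥ 4` and leaves only the vertex `αβ²`. -/
theorem stmt0_general (hα : 0 ≤ α) (hkα : p < k * α) (hγ : 0 ≤ γ) (hγβ : γ ≤ β)
    (hβγ : p < β + γ) (hsum : a * α + b * β + c * γ ≤ 2 * p) (hdeg : 3 ≤ a + b + c)
    (hpar : Even (b + c)) (hb : 2 ≤ b) : b = 2 ∧ c = 0 ∧ 1 ≤ a ∧ a < k := by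
  have haα : 0 ≤ a * α := by positivity
  have hbc : b + c < 2 * 2 :=
    add_lt_two_mul_of_mul_add_mul_le hγ hγβ hβγ two_pos hb (by push_cast; linarith)
  obtain ⟨rfl, rfl⟩ : b = 2 ∧ c = 0 := by grind
  have hremaining : a * α < p := by
    push_cast at hsum
    linarith
  have hak : (a : R) < k := lt_of_mul_lt_mul_right (hremaining.trans hkα) hα
  exact ⟨rfl, rfl, by lia, by exact_mod_cast hak⟩

end AngleSum

theorem stmt0 (α β γ : ℝ) (hα : α > π / 3) (hγ : 0 < γ) (hγβ : γ < β)
    (hβγ : β + γ > π) (a b c : ℕ)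
    (hsum : a * α + b * β + c * γ = 2 * π)
    (hdeg : a + b + c ≥ 3) (hpar : Even (b + c)) (hb : b ≥ 2) :
    b = 2 ∧ c = 0 ∧ (a = 1 ∨ a = 2) := by
  have hα₀ : 0 ≤ α := by linarith [pi_pos]
  have hα₃ : π < (3 : ℕ) * α := by push_cast; linarith
  grind [stmt0_general hα₀ hα₃ hγ.le hγβ.le hβγ hsum.le hdeg hpar hb]
end

section
/- Let α, β, γ be real numbers with α > π/2, 0 < γ < β and β + γ > π. If a, b, c are natural numbers satisfying a·α + b·β + c·γ = 2π, a + b + c ≥ 3, b + c even, and b ≥ 2, then a = 1, b = 2 and c = 0. -/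
/-!
Since `β + γ > π` and `α + β > π`, two `β`s at a vertex leave no room for two further `γ`s or two
further `α`s. As `γ < β`, each `β` beyond the first two takes at least as much room as a `γ`, so
`b + c < 4`. Parity then forces `b = 2` and `c = 0`, and the degree forces `a = 1`.
-/

open Real

section OrderedMonoid

variable {M : Type*} [AddCommMonoid M] [PartialOrder M] [IsOrderedCancelAddMonoid M]

theorem lt_of_nsmul_add_nsmul_le_nsmul {x y p : M} {k m n : ℕ} (hx : 0 ≤ x) (hy : 0 ≤ y)
    (hp : p < x + y) (hk : k ≠ 0) (hm : k ≤ m) (hsum : m • x + n • y ≤ k • p) : n < k := by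
  by_contra! hn
  have hlt : k • p < k • p := calc
    k • p < k • (x + y) := nsmul_lt_nsmul_right hk hp
    _ = k • x + k • y := nsmul_add x y k
    _ ≤ m • x + n • y := by gcongr
    _ ≤ k • p := hsum
  exact hlt.false

theorem add_lt_two_mul_of_nsmul_add_nsmul_le_nsmul {x y p : M} {k m n : ℕ} (hy : 0 ≤ y)
    (hyx : y ≤ x) (hp : p < x + y) (hk : k ≠ 0) (hm : k ≤ m)
    (hsum : m • x + n • y ≤ k • p) : m + n < 2 * k := by
  obtain ⟨j, rfl⟩ := Nat.exists_eq_add_of_le hm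
  have hexchange : k • x + (j + n) • y ≤ k • p := calc
    k • x + (j + n) • y = k • x + j • y + n • y := by rw [add_nsmul, add_assoc]
    _ ≤ k • x + j • x + n • y := by gcongr
    _ = (k + j) • x + n • y := by rw [add_nsmul]
    _ ≤ k • p := hsum
  have hjn : j + n < k :=
    lt_of_nsmul_add_nsmul_le_nsmul (hy.trans hyx) hy hp hk le_rfl hexchange
  lia

theorem stmt1_general {α β γ p : M} (hα : 0 ≤ α) (hγ : 0 ≤ γ) (hγβ : γ ≤ β)
    (hαβ : p < α + β) (hβγ : p < β + γ) {a b c : ℕ}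
    (hsum : a • α + b • β + c • γ = 2 • p)
    (hdeg : 3 ≤ a + b + c) (hpar : Even (b + c)) (hb : 2 ≤ b) :
    a = 1 ∧ b = 2 ∧ c = 0 := by
  have hsum_βγ : b • β + c • γ ≤ 2 • p := by
    rw [← hsum, add_assoc]
    exact le_add_of_nonneg_left (nsmul_nonneg hα a)
  have hsum_βα : b • β + a • α ≤ 2 • p := by
    rw [← hsum, add_comm (b • β)]
    exact le_add_of_nonneg_right (nsmul_nonneg hγ c)
  have hbc : b + c < 2 * 2 :=
    add_lt_two_mul_of_nsmul_add_nsmul_le_nsmul hγ hγβ hβγ two_ne_zero hb hsum_βγ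
  have ha : a < 2 :=
    lt_of_nsmul_add_nsmul_le_nsmul (hγ.trans hγβ) hα (add_comm α β ▸ hαβ) two_ne_zero hb hsum_βα
  obtain ⟨k, hk⟩ := hpar
  lia

end OrderedMonoid

theorem stmt1 (α β γ : ℝ) (hα : α > π / 2) (hγ : 0 < γ) (hγβ : γ < β)
    (hβγ : β + γ > π) (a b c : ℕ)
    (hsum : a * α + b * β + c * γ = 2 * π)
    (hdeg : a + b + c ≥ 3) (hpar : Even (b + c)) (hb : b ≥ 2) :
    a = 1 ∧ b = 2 ∧ c = 0 := by
  have hα₀ : 0 ≤ α := by linarith [pi_pos]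
  have hαβ : π < α + β := by linarith
  exact stmt1_general hα₀ hγ.le hγβ.le hαβ hβγ
    (by simpa only [nsmul_eq_mul, Nat.cast_ofNat] using hsum) hdeg hpar hb
end

section
/- Let α, β, γ be real numbers with α > π/2, 0 < γ < β and β + γ > π. If a, b, c are natural numbers satisfying a·α + b·β + c·γ = 2π, a + b + c ≥ 3, b + c even, b ≥ 1, c ≥ 1, and c ≤ 2a + 1, then (a, b, c) = (1, 1, 1) or (a, b, c) = (1, 1, 3). -/
/-!
Measure angles against a right angle `ρ`, which is `π / 2` in the application. From `β ≥ γ` and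
`β + γ > 2ρ` we get `β > ρ`, while `α ≥ ρ`. Splitting one pair `βγ` off the vertex, the remaining
`a + b - 1` angles `α` and `β` are at least `ρ` each and the pair exceeds `2ρ`, so the angle sum
exceeds `(a + b + 1)ρ`. A sum of at most `4ρ` therefore forces `a + b ≤ 2`, and only a finite
arithmetic check is left.
-/

open Real

section AngleSum

variable {K : Type*} [CommRing K] [LinearOrder K] [IsStrictOrderedRing K] {ρ α β γ : K} {a b c : ℕ}

theorem add_add_one_mul_lt_angle_sum (hα : ρ ≤ α) (hβ : ρ ≤ β) (hγ : 0 ≤ γ)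
    (hβγ : 2 * ρ < β + γ) (hb : 1 ≤ b) (hc : 1 ≤ c) :
    (a + b + 1) * ρ < a * α + b * β + c * γ := by
  obtain ⟨b, rfl⟩ := Nat.exists_eq_add_of_le' hb
  obtain ⟨c, rfl⟩ := Nat.exists_eq_add_of_le' hc
  calc (a + (b + 1 : ℕ) + 1) * ρ = a * ρ + b * ρ + 2 * ρ := by push_cast; ring
    _ < a * α + b * β + (β + γ) := add_lt_add_of_le_of_lt (by gcongr) hβγ
    _ ≤ a * α + b * β + (β + γ) + c * γ := le_add_of_nonneg_right (by positivity)
    _ = a * α + (b + 1 : ℕ) * β + (c + 1 : ℕ) * γ := by push_cast; ring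

theorem add_le_two_of_angle_sum_le (hρ : 0 < ρ) (hα : ρ ≤ α) (hγ : 0 ≤ γ) (hγβ : γ ≤ β)
    (hβγ : 2 * ρ < β + γ) (hb : 1 ≤ b) (hc : 1 ≤ c)
    (hsum : a * α + b * β + c * γ ≤ 4 * ρ) : a + b ≤ 2 := by
  have hβ : ρ ≤ β := by linarith
  have hlt : ((a + b + 1 : ℕ) : K) * ρ < (4 : ℕ) * ρ := by
    push_cast
    exact (add_add_one_mul_lt_angle_sum hα hβ hγ hβγ hb hc).trans_le hsum
  have hcount : a + b + 1 < 4 := Nat.cast_lt.mp (lt_of_mul_lt_mul_right hlt hρ.le)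
  lia

theorem eq_one_one_one_or_eq_one_one_three (hab : a + b ≤ 2) (hdeg : 3 ≤ a + b + c)
    (hpar : Even (b + c)) (hb : 1 ≤ b) (hcle : c ≤ 2 * a + 1) :
    (a, b, c) = (1, 1, 1) ∨ (a, b, c) = (1, 1, 3) := by
  simp only [Prod.mk.injEq]
  obtain ⟨k, hk⟩ := hpar
  obtain ⟨rfl, rfl⟩ | ⟨rfl, rfl⟩ | ⟨rfl, rfl⟩ :
      a = 0 ∧ b = 1 ∨ a = 0 ∧ b = 2 ∨ a = 1 ∧ b = 1 := by lia
  all_goals lia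

theorem stmt2_general (hρ : 0 < ρ) (hα : ρ ≤ α) (hγ : 0 ≤ γ) (hγβ : γ ≤ β)
    (hβγ : 2 * ρ < β + γ) (hsum : a * α + b * β + c * γ ≤ 4 * ρ)
    (hdeg : 3 ≤ a + b + c) (hpar : Even (b + c)) (hb : 1 ≤ b) (hc : 1 ≤ c)
    (hcle : c ≤ 2 * a + 1) :
    (a, b, c) = (1, 1, 1) ∨ (a, b, c) = (1, 1, 3) :=
  eq_one_one_one_or_eq_one_one_three
    (add_le_two_of_angle_sum_le hρ hα hγ hγβ hβγ hb hc hsum) hdeg hpar hb hcle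

end AngleSum

theorem stmt2 (α β γ : ℝ) (hα : α > π / 2) (hγ : 0 < γ) (hγβ : γ < β)
    (hβγ : β + γ > π) (a b c : ℕ)
    (hsum : a * α + b * β + c * γ = 2 * π)
    (hdeg : a + b + c ≥ 3) (hpar : Even (b + c)) (hb : b ≥ 1) (hc : c ≥ 1)
    (hcle : c ≤ 2 * a + 1) :
    (a, b, c) = (1, 1, 1) ∨ (a, b, c) = (1, 1, 3) :=
  stmt2_general pi_div_two_pos hα.le hγ.le hγβ.le (by linarith) (by linarith)
    hdeg hpar hb hc hcle
end

section
/- Let α, β, γ be real numbers with α > π/3, 0 < γ < β and β + γ > π. If a, b, c are natural numbers satisfying a·α + b·β + c·γ = 2π, a + b + c ≥ 3, b + c even, b ≥ 1, c ≥ 1, and c ≤ 2a + 1, then (a, b, c) is one of (1,1,1), (2,1,1), (1,1,3), (2,1,3), (2,1,5). -/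
open Real

/-!
As `γ ≤ β`, replacing a `β` by a `γ` does not increase the angle sum at a vertex, so at least
`2 * k` copies of `β` and `γ`, at least `k` of them `β`, contribute at least `k * (β + γ)`. With
`k = 2` this is more than a full turn `2 * p`, and by parity two `β` together with a `γ` force this
case, so there is only one `β`. With `k = 1` it is more than the half turn `p`, so the copies of `α`
have less than a half turn to share.
-/

section AngleSum

variable {R : Type*} [CommRing R] [LinearOrder R] [IsStrictOrderedRing R] {p α β γ : R} {a b c : ℕ}

theorem mul_add_le_mul_add_mul_of_two_mul_le {k : ℕ} (hγ : 0 ≤ γ) (hγβ : γ ≤ β) (hkb : k ≤ b)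
    (hkbc : 2 * k ≤ b + c) : k * (β + γ) ≤ b * β + c * γ := by
  have hb : (0 : R) ≤ b - k := sub_nonneg.2 (mod_cast hkb)
  have hbc : (0 : R) ≤ b + c - 2 * k := sub_nonneg.2 (mod_cast hkbc)
  calc k * (β + γ)
      ≤ k * (β + γ) + ((b - k) * (β - γ) + (b + c - 2 * k) * γ) :=
        le_add_of_nonneg_right <|
          add_nonneg (mul_nonneg hb (sub_nonneg.2 hγβ)) (mul_nonneg hbc hγ)
    _ = b * β + c * γ := by ring

theorem beta_count_lt_two_of_angle_sum (hα : 0 ≤ α) (hγ : 0 ≤ γ) (hγβ : γ ≤ β) (hβγ : p < β + γ)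
    (hsum : a * α + b * β + c * γ = 2 * p) (hpar : Even (b + c)) (hc : 1 ≤ c) : b < 2 := by
  by_contra! hb
  have hbc : 2 * 2 ≤ b + c := by
    obtain ⟨k, hk⟩ := hpar
    omega
  have hfull : 2 * (β + γ) ≤ b * β + c * γ :=
    mod_cast mul_add_le_mul_add_mul_of_two_mul_le hγ hγβ hb hbc
  have haα : 0 ≤ a * α := by positivity
  linarith

theorem alpha_count_lt_of_angle_sum {n : ℕ} (hα : 0 ≤ α) (hn : p ≤ n * α) (hγ : 0 ≤ γ)
    (hγβ : γ ≤ β) (hβγ : p < β + γ) (hsum : a * α + b * β + c * γ = 2 * p) (hb : 1 ≤ b)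
    (hbc : 2 ≤ b + c) : a < n := by
  by_contra! hna
  have hhalf : β + γ ≤ b * β + c * γ := by
    simpa only [Nat.cast_one, one_mul] using
      mul_add_le_mul_add_mul_of_two_mul_le hγ hγβ hb hbc
  have haα : n * α ≤ a * α := by gcongr
  linarith

theorem stmt3_general (hα₀ : 0 ≤ α) (hα : p ≤ 3 * α) (hγ : 0 ≤ γ) (hγβ : γ ≤ β) (hβγ : p < β + γ)
    (hsum : a * α + b * β + c * γ = 2 * p) (hdeg : 3 ≤ a + b + c) (hpar : Even (b + c))
    (hb : 1 ≤ b) (hc : 1 ≤ c) (hcle : c ≤ 2 * a + 1) :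
    (a, b, c) = (1, 1, 1) ∨ (a, b, c) = (2, 1, 1) ∨ (a, b, c) = (1, 1, 3) ∨
      (a, b, c) = (2, 1, 3) ∨ (a, b, c) = (2, 1, 5) := by
  have hb_lt : b < 2 := beta_count_lt_two_of_angle_sum hα₀ hγ hγβ hβγ hsum hpar hc
  have ha_lt : a < 3 :=
    alpha_count_lt_of_angle_sum hα₀ (mod_cast hα) hγ hγβ hβγ hsum hb (by omega)
  obtain ⟨k, hk⟩ := hpar
  simp only [Prod.mk.injEq]
  omega

end AngleSum

theorem stmt3 (α β γ : ℝ) (hα : α > π / 3) (hγ : 0 < γ) (hγβ : γ < β)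
    (hβγ : β + γ > π) (a b c : ℕ)
    (hsum : a * α + b * β + c * γ = 2 * π)
    (hdeg : a + b + c ≥ 3) (hpar : Even (b + c)) (hb : b ≥ 1) (hc : c ≥ 1)
    (hcle : c ≤ 2 * a + 1) :
    (a, b, c) = (1, 1, 1) ∨ (a, b, c) = (2, 1, 1) ∨ (a, b, c) = (1, 1, 3) ∨
      (a, b, c) = (2, 1, 3) ∨ (a, b, c) = (2, 1, 5) :=
  stmt3_general (by linarith [pi_pos]) (by linarith) hγ.le hγβ.le hβγ hsum hdeg hpar hb hc hcle
end

section
/- Let α, β, γ be real numbers with α > π/3, 0 < γ < β, β + γ > π and α + 2β = 2π. If a, c are natural numbers with c ≥ 1, c odd, a + 1 + c ≥ 3, c ≤ 2a + 1 and a·α + β + c·γ = 2π, then (a, c) = (2, 1) or (a, c) = (1, 3). -/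
/-!
From `α + 2β = 2π` and `β + γ > π` one gets `α < 2γ`, so replacing all but one `γ` of the vertex
by `α / 2` and the remaining `β + γ` by `π` only decreases the angle sum: `(2a + c - 1) α < 2π`.
Since `π < 3α`, this forces `2a + c < 7`. If `c = 1`, comparison with the vertex `αβ²` gives
`(a - 1) α = β - γ > 0`, hence `a ≥ 2`. Parity and `c ≤ 2a + 1` leave only `α²βγ` and `αβγ³`.

In the lemmas the half-turn `π` is an arbitrary element `p` of an ordered ring.
-/

open Real

section OrderedRing

variable {K : Type*} [CommRing K] [LinearOrder K] [IsStrictOrderedRing K] {p α β γ : K} {a c : ℕ}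

theorem two_mul_add_lt_of_angle_sum {n : ℕ} (hα : 0 ≤ α) (hp : p < n * α) (hαγ : α ≤ 2 * γ)
    (hβγ : p ≤ β + γ) (hc : 1 ≤ c) (hsum : a * α + β + c * γ = 2 * p) :
    2 * a + c < 2 * n + 1 := by
  have hc' : (0 : K) ≤ c - 1 := sub_nonneg.mpr (Nat.one_le_cast.mpr hc)
  have key : (2 * a + c : K) * α < (2 * n + 1) * α :=
    calc (2 * a + c : K) * α = 2 * (a * α) + α + (c - 1) * α := by ring
      _ ≤ 2 * (a * α) + α + (c - 1) * (2 * γ) := by gcongr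
      _ = 2 * (2 * p - (β + γ)) + α := by linear_combination 2 * hsum
      _ ≤ 2 * p + α := by linarith
      _ < (2 * n + 1) * α := by linarith
  exact_mod_cast lt_of_mul_lt_mul_right key hα

theorem one_lt_of_angle_sum_of_lt (hα : 0 ≤ α) (hγβ : γ < β) (hv : α + 2 * β = 2 * p)
    (hsum : a * α + β + γ = 2 * p) : 1 < a := by
  have key : 1 * α < a * α := by linarith
  exact_mod_cast lt_of_mul_lt_mul_right key hα

theorem stmt6_general (hα : p < 3 * α) (hγβ : γ < β) (hβγ : p < β + γ)
    (hv : α + 2 * β = 2 * p) (hodd : Odd c) (hcle : c ≤ 2 * a + 1)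
    (hsum : a * α + β + c * γ = 2 * p) :
    (a, c) = (2, 1) ∨ (a, c) = (1, 3) := by
  have hα₀ : 0 ≤ α := by linarith [show α < p by linarith]
  have hαγ : α ≤ 2 * γ := by linarith
  have bound : 2 * a + c < 2 * 3 + 1 :=
    two_mul_add_lt_of_angle_sum hα₀ (mod_cast hα) hαγ hβγ.le hodd.pos hsum
  have one_lt_of_eq_one : c = 1 → 1 < a := by
    rintro rfl
    exact one_lt_of_angle_sum_of_lt hα₀ hγβ hv (by simpa only [Nat.cast_one, one_mul] using hsum)
  obtain ⟨k, rfl⟩ := hodd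
  simp only [Prod.mk.injEq]
  omega

end OrderedRing

theorem stmt6 (α β γ : ℝ) (hα : α > π / 3) (hγ : 0 < γ) (hγβ : γ < β)
    (hβγ : β + γ > π) (hv : α + 2 * β = 2 * π) (a c : ℕ)
    (hc : c ≥ 1) (hodd : Odd c) (hdeg : a + 1 + c ≥ 3) (hcle : c ≤ 2 * a + 1)
    (hsum : a * α + β + c * γ = 2 * π) :
    (a, c) = (2, 1) ∨ (a, c) = (1, 3) :=
  stmt6_general (by linarith) hγβ hβγ hv hodd hcle hsum
end

section
/- Let α be a real number with 0 < α < 2π/3. Then 5·tan⁴(α/4) − 10·tan²(α/4) + 1 = 0 if and only if α = 2π/5. -/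
open Real

/-!
With `θ = α / 4`, the polynomial in `tan θ` is `cos (5 * θ) / cos θ ^ 5`, so its roots are the
zeros of `cos (5 * θ)`. On the given range `5 * θ` lies strictly between `-(π / 2)` and
`3 * π / 2`, where the cosine vanishes only at `π / 2`.
-/

theorem cos_five_mul (θ : ℝ) :
    cos (5 * θ) = cos θ ^ 5 - 10 * cos θ ^ 3 * sin θ ^ 2 + 5 * cos θ * sin θ ^ 4 := by
  have hcos : cos (3 * θ) = cos θ ^ 3 - 3 * cos θ * sin θ ^ 2 := by
    linear_combination cos_three_mul θ + 3 * cos θ * sin_sq_add_cos_sq θ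
  have hsin : sin (3 * θ) = 3 * cos θ ^ 2 * sin θ - sin θ ^ 3 := by
    linear_combination sin_three_mul θ - 3 * sin θ * sin_sq_add_cos_sq θ
  calc
    cos (5 * θ) = cos (2 * θ + 3 * θ) := by ring_nf
    _ = cos (2 * θ) * cos (3 * θ) - sin (2 * θ) * sin (3 * θ) := cos_add _ _
    _ = cos θ ^ 5 - 10 * cos θ ^ 3 * sin θ ^ 2 + 5 * cos θ * sin θ ^ 4 := by
      rw [cos_two_mul', sin_two_mul, hcos, hsin]
      ring

theorem cos_five_mul_eq_cos_pow_mul_tan {θ : ℝ} (hθ : cos θ ≠ 0) :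
    cos (5 * θ) = cos θ ^ 5 * (5 * tan θ ^ 4 - 10 * tan θ ^ 2 + 1) := by
  rw [cos_five_mul, tan_eq_sin_div_cos]
  field_simp
  ring

theorem tan_quartic_eq_zero_iff_cos_five_mul_eq_zero {θ : ℝ} (hθ : cos θ ≠ 0) :
    5 * tan θ ^ 4 - 10 * tan θ ^ 2 + 1 = 0 ↔ cos (5 * θ) = 0 := by
  rw [cos_five_mul_eq_cos_pow_mul_tan hθ, mul_eq_zero_iff_left (pow_ne_zero 5 hθ)]

theorem cos_eq_zero_iff_eq_pi_div_two {x : ℝ} (hx₁ : -(π / 2) < x) (hx₂ : x < 3 * π / 2) :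
    cos x = 0 ↔ x = π / 2 := by
  rw [← sin_pi_div_two_sub, sin_eq_zero_iff_of_lt_of_lt (by linarith) (by linarith),
    sub_eq_zero, eq_comm]

theorem stmt13_general {α : ℝ} (hα₁ : -(2 * π / 5) < α) (hα₂ : α < 6 * π / 5) :
    5 * tan (α / 4) ^ 4 - 10 * tan (α / 4) ^ 2 + 1 = 0 ↔ α = 2 * π / 5 := by
  have hcos : cos (α / 4) ≠ 0 :=
    (cos_pos_of_mem_Ioo ⟨by linarith [pi_pos], by linarith [pi_pos]⟩).ne'
  calc
    5 * tan (α / 4) ^ 4 - 10 * tan (α / 4) ^ 2 + 1 = 0 ↔ cos (5 * (α / 4)) = 0 :=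
      tan_quartic_eq_zero_iff_cos_five_mul_eq_zero hcos
    _ ↔ 5 * (α / 4) = π / 2 := cos_eq_zero_iff_eq_pi_div_two (by linarith) (by linarith)
    _ ↔ α = 2 * π / 5 := by constructor <;> intro h <;> linarith

theorem stmt13 (α : ℝ) (h1 : 0 < α) (h2 : α < 2 * π / 3) :
    5 * tan (α / 4) ^ 4 - 10 * tan (α / 4) ^ 2 + 1 = 0 ↔ α = 2 * π / 5 :=
  stmt13_general (by linarith [pi_pos]) (by linarith [pi_pos])
end

section
/- Let α be a real number with 0 < α < 2π/3, and set β = π − α/2 and γ = π − 3α/2. Then cos²(α/2)/sin²(α/2) + cos(2π/3)/sin²(α/2) = (cos(β/2)/sin(β/2))·(cos(γ/2)/sin(γ/2)) holds if and only if 5·tan⁴(α/4) − 10·tan²(α/4) + 1 = 0. -/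
open Real

/-
Since `β / 2 = π / 2 - α / 4` and `γ / 2 = π / 2 - 3 * (α / 4)`, the right-hand side is
`tan x * tan (3 * x)` with `x = α / 4`, while `α / 2 = 2 * x` on the left. Both sides are therefore
rational functions of `t = tan x`, and their difference is
`(1 + t ^ 2) * (5 * t ^ 4 - 10 * t ^ 2 + 1) / (8 * t ^ 2 * (1 - 3 * t ^ 2))`.
-/

theorem sin_three_mul_eq_cos_pow_mul_tan {x : ℝ} (hx : cos x ≠ 0) :
    sin (3 * x) = cos x ^ 3 * (tan x * (3 - tan x ^ 2)) := by
  rw [sin_three_mul, ← tan_mul_cos hx]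
  linear_combination -3 * tan x * cos x * one_add_tan_sq_mul_cos_sq_eq_one hx

theorem cos_three_mul_eq_cos_pow_mul_tan {x : ℝ} (hx : cos x ≠ 0) :
    cos (3 * x) = cos x ^ 3 * (1 - 3 * tan x ^ 2) := by
  rw [cos_three_mul]
  linear_combination 3 * cos x * one_add_tan_sq_mul_cos_sq_eq_one hx

theorem tan_three_mul (x : ℝ) :
    tan (3 * x) = tan x * (3 - tan x ^ 2) / (1 - 3 * tan x ^ 2) := by
  by_cases hx : cos x = 0
  · simp [tan_eq_sin_div_cos, cos_three_mul, hx]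
  · rw [tan_eq_sin_div_cos (3 * x), sin_three_mul_eq_cos_pow_mul_tan hx,
      cos_three_mul_eq_cos_pow_mul_tan hx, mul_div_mul_left _ _ (pow_ne_zero 3 hx)]

theorem cot_sq_two_mul_add_div_sin_sq_two_mul (k x : ℝ) :
    cos (2 * x) ^ 2 / sin (2 * x) ^ 2 + k / sin (2 * x) ^ 2 =
      ((1 - tan x ^ 2) ^ 2 + k * (1 + tan x ^ 2) ^ 2) / (4 * tan x ^ 2) := by
  by_cases hx : cos x = 0
  · simp [tan_eq_sin_div_cos, sin_two_mul, hx]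
  have hsq : (1 + tan x ^ 2) * cos x ^ 2 = 1 := one_add_tan_sq_mul_cos_sq_eq_one hx
  have hsin : sin (2 * x) ^ 2 = cos x ^ 4 * (4 * tan x ^ 2) := by
    rw [sin_two_mul, ← tan_mul_cos hx]
    ring
  have hcos : cos (2 * x) = cos x ^ 2 * (1 - tan x ^ 2) := by
    rw [cos_two_mul]
    linear_combination hsq
  have hnum : cos (2 * x) ^ 2 + k =
      cos x ^ 4 * ((1 - tan x ^ 2) ^ 2 + k * (1 + tan x ^ 2) ^ 2) := by
    rw [hcos]
    linear_combination -k * ((1 + tan x ^ 2) * cos x ^ 2 + 1) * hsq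
  rw [← add_div, hnum, hsin, mul_div_mul_left _ _ (pow_ne_zero 4 hx)]

theorem div_eq_mul_div_iff_quartic_eq_zero {K : Type*} [Field K] {t : K} (h2 : (2 : K) ≠ 0)
    (ht : t ≠ 0) (hadd : 1 + t ^ 2 ≠ 0) (hsub : 1 - 3 * t ^ 2 ≠ 0) :
    ((1 - t ^ 2) ^ 2 + -(1 / 2) * (1 + t ^ 2) ^ 2) / (4 * t ^ 2) =
        t * (t * (3 - t ^ 2) / (1 - 3 * t ^ 2)) ↔
      5 * t ^ 4 - 10 * t ^ 2 + 1 = 0 := by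
  have h4 : (4 : K) * t ^ 2 ≠ 0 := by
    rw [show (4 : K) = 2 ^ 2 by norm_num]
    exact mul_ne_zero (pow_ne_zero 2 h2) (pow_ne_zero 2 ht)
  have hfactor : 2 * (((1 - t ^ 2) ^ 2 + -(1 / 2) * (1 + t ^ 2) ^ 2) * (1 - 3 * t ^ 2) -
      t * (t * (3 - t ^ 2)) * (4 * t ^ 2)) = (1 + t ^ 2) * (5 * t ^ 4 - 10 * t ^ 2 + 1) := by
    field_simp
    ring
  rw [← mul_div_assoc, div_eq_div_iff h4 hsub, ← sub_eq_zero, ← mul_eq_zero_iff_left h2,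
    hfactor, mul_eq_zero, or_iff_right hadd]

theorem cot_sq_sub_half_div_sin_sq_eq_tan_mul_tan_iff {x : ℝ} (hsin : sin (2 * x) ≠ 0)
    (hcos : cos (3 * x) ≠ 0) :
    cos (2 * x) ^ 2 / sin (2 * x) ^ 2 + -(1 / 2) / sin (2 * x) ^ 2 = tan x * tan (3 * x) ↔
      5 * tan x ^ 4 - 10 * tan x ^ 2 + 1 = 0 := by
  obtain ⟨hs, hc⟩ : sin x ≠ 0 ∧ cos x ≠ 0 := by simpa [sin_two_mul] using hsin
  have ht : tan x ≠ 0 := by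
    rw [tan_eq_sin_div_cos]
    exact div_ne_zero hs hc
  have hsub : 1 - 3 * tan x ^ 2 ≠ 0 :=
    right_ne_zero_of_mul (cos_three_mul_eq_cos_pow_mul_tan hc ▸ hcos)
  rw [cot_sq_two_mul_add_div_sin_sq_two_mul, tan_three_mul]
  exact div_eq_mul_div_iff_quartic_eq_zero two_ne_zero ht (by positivity) hsub

theorem cos_div_sin_pi_div_two_sub (x : ℝ) : cos (π / 2 - x) / sin (π / 2 - x) = tan x := by
  rw [cos_pi_div_two_sub, sin_pi_div_two_sub, tan_eq_sin_div_cos]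

theorem cos_two_mul_pi_div_three : cos (2 * π / 3) = -(1 / 2) := by
  rw [show 2 * π / 3 = π - π / 3 by ring, cos_pi_sub, cos_pi_div_three]

theorem stmt14_general (α β γ : ℝ) (hβ : β = π - α / 2) (hγ : γ = π - 3 * α / 2)
    (hsinα : sin (α / 2) ≠ 0) (hsinγ : sin (γ / 2) ≠ 0) :
    cos (α / 2) ^ 2 / sin (α / 2) ^ 2 + cos (2 * π / 3) / sin (α / 2) ^ 2 =
        (cos (β / 2) / sin (β / 2)) * (cos (γ / 2) / sin (γ / 2)) ↔
      5 * tan (α / 4) ^ 4 - 10 * tan (α / 4) ^ 2 + 1 = 0 := by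
  have hα2 : α / 2 = 2 * (α / 4) := by ring
  have hβ2 : β / 2 = π / 2 - α / 4 := by rw [hβ]; ring
  have hγ2 : γ / 2 = π / 2 - 3 * (α / 4) := by rw [hγ]; ring
  rw [hα2] at hsinα ⊢
  rw [hγ2, sin_pi_div_two_sub] at hsinγ
  rw [hβ2, hγ2, cos_div_sin_pi_div_two_sub, cos_div_sin_pi_div_two_sub, cos_two_mul_pi_div_three]
  exact cot_sq_sub_half_div_sin_sq_eq_tan_mul_tan_iff hsinα hsinγ

theorem stmt14 (α : ℝ) (h1 : 0 < α) (h2 : α < 2 * π / 3)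
    (β γ : ℝ) (hβ : β = π - α / 2) (hγ : γ = π - 3 * α / 2) :
    cos (α / 2) ^ 2 / sin (α / 2) ^ 2 + cos (2 * π / 3) / sin (α / 2) ^ 2 =
        (cos (β / 2) / sin (β / 2)) * (cos (γ / 2) / sin (γ / 2)) ↔
      5 * tan (α / 4) ^ 4 - 10 * tan (α / 4) ^ 2 + 1 = 0 :=
  stmt14_general α β γ hβ hγ (sin_pos_of_pos_of_lt_pi (by linarith) (by linarith)).ne'
    (sin_pos_of_pos_of_lt_pi (by linarith) (by linarith)).ne'
end

section
/- Let α be a real number with 0 < α < π. Then tan⁴(α/4) + 8·tan²(α/4) − 1 = 0 if and only if α = 4·arctan(√(√17 − 4)). -/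
/-!
The equation is quadratic in `t ^ 2`, with roots `-b ± √(b ^ 2 + c)`. For `c > 0` these have
opposite signs, so only one of them is a square, and exactly one `t ≥ 0` solves the equation. On
`[0, π / 2)` the tangent is nonnegative and inverted by `arctan`, so this `t` determines the angle.
-/

open Real

theorem biquadratic_eq_mul {b c : ℝ} (h : 0 ≤ b ^ 2 + c) (t : ℝ) :
    t ^ 4 + 2 * b * t ^ 2 - c =
      (t ^ 2 - (√(b ^ 2 + c) - b)) * (t ^ 2 + (√(b ^ 2 + c) + b)) := by
  linear_combination sq_sqrt h

theorem abs_lt_sqrt_sq_add (b : ℝ) {c : ℝ} (hc : 0 < c) : |b| < √(b ^ 2 + c) :=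
  lt_sqrt_of_sq_lt (by rw [sq_abs]; exact lt_add_of_pos_right _ hc)

theorem biquadratic_eq_zero_iff_sq_eq (b : ℝ) {c : ℝ} (hc : 0 < c) (t : ℝ) :
    t ^ 4 + 2 * b * t ^ 2 - c = 0 ↔ t ^ 2 = √(b ^ 2 + c) - b := by
  have hfactor_pos : 0 < t ^ 2 + (√(b ^ 2 + c) + b) := by
    linarith [sq_nonneg t, neg_le_abs b, abs_lt_sqrt_sq_add b hc]
  rw [biquadratic_eq_mul (by positivity), mul_eq_zero, or_iff_left hfactor_pos.ne', sub_eq_zero]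

theorem biquadratic_eq_zero_iff_eq_sqrt (b : ℝ) {c t : ℝ} (hc : 0 < c) (ht : 0 ≤ t) :
    t ^ 4 + 2 * b * t ^ 2 - c = 0 ↔ t = √(√(b ^ 2 + c) - b) := by
  have hroot_nonneg : 0 ≤ √(b ^ 2 + c) - b :=
    sub_nonneg.2 ((le_abs_self b).trans (abs_lt_sqrt_sq_add b hc).le)
  rw [biquadratic_eq_zero_iff_sq_eq b hc, eq_comm (a := t), sqrt_eq_iff_eq_sq hroot_nonneg ht,
    eq_comm]

theorem tan_eq_iff_eq_arctan {x y : ℝ} (hx₁ : -(π / 2) < x) (hx₂ : x < π / 2) :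
    tan x = y ↔ x = arctan y :=
  ⟨fun h ↦ (arctan_eq_of_tan_eq h ⟨hx₁, hx₂⟩).symm, fun h ↦ h ▸ tan_arctan y⟩

theorem stmt16_general (b : ℝ) {c α : ℝ} (hc : 0 < c) (hα₀ : 0 ≤ α) (hα : α < 2 * π) :
    tan (α / 4) ^ 4 + 2 * b * tan (α / 4) ^ 2 - c = 0 ↔
      α = 4 * arctan (√(√(b ^ 2 + c) - b)) := by
  have hquarter_nonneg : 0 ≤ α / 4 := by positivity
  have hquarter_lt : α / 4 < π / 2 := by linarith
  have htan_nonneg : 0 ≤ tan (α / 4) :=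
    tan_nonneg_of_nonneg_of_le_pi_div_two hquarter_nonneg hquarter_lt.le
  rw [biquadratic_eq_zero_iff_eq_sqrt b hc htan_nonneg,
    tan_eq_iff_eq_arctan (by linarith [pi_pos]) hquarter_lt, div_eq_iff four_ne_zero, mul_comm]

theorem stmt16 (α : ℝ) (h1 : 0 < α) (h2 : α < π) :
    tan (α / 4) ^ 4 + 8 * tan (α / 4) ^ 2 - 1 = 0 ↔
      α = 4 * Real.arctan (Real.sqrt (Real.sqrt 17 - 4)) := by
  rw [show (8 : ℝ) = 2 * 4 by norm_num, show (17 : ℝ) = 4 ^ 2 + 1 by norm_num]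
  exact stmt16_general 4 one_pos h1.le (by linarith)
end

section
/- Let α = 4·arctan(√(√17 − 4)). For a real number x with 0 < x < π, the equation cos x = cos²x + sin²x·cos α holds if and only if x = 2·arctan(√((√17 − 3)/2)). -/
open Real

/-!
For `cos x ≠ 1` the factor `1 - cos x` cancels from the cosine law of an equilateral spherical
triangle, leaving `cos x = (1 + cos x) * cos α`. In terms of `t = tan (x / 2)` this is
`t ^ 2 = 1 - 2 * cos α`, so the angle determines the edge length as
`x = 2 * arctan √(1 - 2 * cos α)`. It remains to evaluate `cos α = (5 - √17) / 4` by applying the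
double-angle formula twice.
-/

lemma cos_eq_cos_sq_add_sin_sq_mul_iff {x k : ℝ} (hx : cos x ≠ 1) :
    cos x = cos x ^ 2 + sin x ^ 2 * k ↔ cos x = (1 + cos x) * k := by
  have factorization : cos x - (cos x ^ 2 + sin x ^ 2 * k) =
      (1 - cos x) * (cos x - (1 + cos x) * k) := by
    rw [sin_sq]
    ring
  rw [← sub_eq_zero, factorization, mul_eq_zero_iff_left (sub_ne_zero.2 hx.symm), sub_eq_zero]

lemma cos_eq_one_add_cos_mul_iff_tan_half_sq_eq {x k : ℝ} (hx : cos x ≠ -1) :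
    cos x = (1 + cos x) * k ↔ tan (x / 2) ^ 2 = 1 - 2 * k := by
  have one_add_pos : 0 < 1 + tan (x / 2) ^ 2 := by positivity
  rw [cos_eq_two_mul_tan_half_div_one_sub_tan_half_sq x hx, one_add_div one_add_pos.ne',
    div_mul_eq_mul_div, div_left_inj' one_add_pos.ne']
  constructor <;> intro h <;> linarith

-- For `a < 0` both sides are false: `√a` is `0` there, which would force `x = 0`.
lemma eq_two_mul_arctan_sqrt_iff {x a : ℝ} (hx₀ : 0 < x) (hxπ : x < π) :
    x = 2 * arctan √a ↔ tan (x / 2) ^ 2 = a := by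
  have tan_half_pos : 0 < tan (x / 2) := tan_pos_of_pos_of_lt_pi_div_two (by linarith) (by linarith)
  have arctan_tan_half : arctan (tan (x / 2)) = x / 2 := arctan_tan (by linarith) (by linarith)
  calc x = 2 * arctan √a ↔ arctan √a = x / 2 := by
        constructor <;> intro h <;> linarith
    _ ↔ √a = tan (x / 2) := by rw [← arctan_tan_half, arctan_inj, arctan_tan_half]
    _ ↔ tan (x / 2) ^ 2 = a := by rw [sqrt_eq_iff_mul_self_eq_of_pos tan_half_pos, sq]

theorem cos_eq_cos_sq_add_sin_sq_mul_iff_eq_two_mul_arctan_sqrt {x k : ℝ}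
    (hx₀ : 0 < x) (hxπ : x < π) :
    cos x = cos x ^ 2 + sin x ^ 2 * k ↔ x = 2 * arctan √(1 - 2 * k) := by
  have cos_lt_one : cos x < 1 := by
    simpa only [cos_zero] using cos_lt_cos_of_nonneg_of_le_pi le_rfl hxπ.le hx₀
  have neg_one_lt_cos : -1 < cos x := by
    simpa only [cos_pi] using cos_lt_cos_of_nonneg_of_le_pi hx₀.le le_rfl hxπ
  rw [cos_eq_cos_sq_add_sin_sq_mul_iff cos_lt_one.ne,
    cos_eq_one_add_cos_mul_iff_tan_half_sq_eq neg_one_lt_cos.ne',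
    eq_two_mul_arctan_sqrt_iff hx₀ hxπ]

lemma cos_two_mul_arctan (t : ℝ) : cos (2 * arctan t) = (1 - t ^ 2) / (1 + t ^ 2) := by
  rw [cos_two_mul, cos_sq_arctan]
  field_simp
  ring

lemma cos_two_mul_arctan_sqrt_sqrt_seventeen_sub_four :
    cos (2 * arctan √(√17 - 4)) = (√17 - 1) / 4 := by
  have four_lt_sqrt : 4 < √17 := lt_sqrt_of_sq_lt (by norm_num)
  have sq_sqrt_seventeen : √17 ^ 2 = 17 := sq_sqrt (by norm_num)
  rw [cos_two_mul_arctan, sq_sqrt (by linarith), div_eq_div_iff (by linarith) (by norm_num)]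
  linear_combination -sq_sqrt_seventeen

lemma cos_four_mul_arctan_sqrt_sqrt_seventeen_sub_four :
    cos (4 * arctan √(√17 - 4)) = (5 - √17) / 4 := by
  have sq_sqrt_seventeen : √17 ^ 2 = 17 := sq_sqrt (by norm_num)
  calc cos (4 * arctan √(√17 - 4)) = cos (2 * (2 * arctan √(√17 - 4))) := by ring_nf
    _ = 2 * ((√17 - 1) / 4) ^ 2 - 1 := by
        rw [cos_two_mul, cos_two_mul_arctan_sqrt_sqrt_seventeen_sub_four]
    _ = (5 - √17) / 4 := by linear_combination sq_sqrt_seventeen / 8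

theorem stmt18 (α : ℝ) (hα : α = 4 * Real.arctan (Real.sqrt (Real.sqrt 17 - 4)))
    (x : ℝ) (h1 : 0 < x) (h2 : x < π) :
    cos x = cos x ^ 2 + sin x ^ 2 * cos α ↔
      x = 2 * Real.arctan (Real.sqrt ((Real.sqrt 17 - 3) / 2)) := by
  have tan_half_sq_value : 1 - 2 * cos α = (√17 - 3) / 2 := by
    rw [hα, cos_four_mul_arctan_sqrt_sqrt_seventeen_sub_four]
    ring
  rw [cos_eq_cos_sq_add_sin_sq_mul_iff_eq_two_mul_arctan_sqrt h1 h2, tan_half_sq_value]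
end
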